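/- Let F be a field, n ≥ 1, ℓ ≥ 0, and let τ_0, …, τ_ℓ ∈ F be distinct with barycentric weights β_k = ∏_{j≠k} 1/(τ_k − τ_j). Let P(z) be any n×n matrix polynomial over F of degree at most ℓ, and set P_k = P(τ_k). Let L(z) be the n(ℓ+2) × n(ℓ+2) block pencil (block indices 0, …, ℓ+1) with block (0,0) = 0, blocks (0, 1+i) = −P_{ℓ−i}, blocks (1+i, 0) = β_{ℓ−i}·I_n, blocks (1+i, 1+i) = (z − τ_{ℓ−i})·I_n for 0 ≤ i ≤ ℓ, and other blocks 0. Then, without any invertibility assumption on the values P_k and without assuming P is regular, L(z) is equivalent over F[z] to diag(P(z), I_n, …, I_n) with ℓ+1 identity blocks: there exist unimodular matrix polynomials E(z), F(z) over F[z] with E(z)·L(z)·F(z) = diag(P(z), I_n, …, I_n). -/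

import Mathlib

open Polynomial

/-!
The pencil factors as `L_P = [[P, R], [0, I]] * L_I`, where `L_I` is the pencil of the constant
polynomial `I` and the `i`-th block of `R` is the divided difference `(P - P(τ_i)) / (z - τ_i)`.
The upper right block of this identity is the definition of `R`. The upper left block is
`∑ β_i R_i = 0`: after multiplication by the nodal polynomial it says that `P` equals its
interpolant, which is where the degree bound enters. Finally `det L_I = 1`, since multiplying
`L_I` by a block triangular matrix whose first column holds the nodal polynomial and the Lagrange
basis gives a block triangular matrix of the same nonzero determinant.
-/

section LagrangeInterpolation

variable {F ι : Type*} [Field F] [DecidableEq ι] {s : Finset ι} {v : ι → F}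

lemma C_nodalWeight_mul_nodal {i : ι} (hi : i ∈ s) :
    C (Lagrange.nodalWeight s v i) * Lagrange.nodal s v =
      (X - C (v i)) * Lagrange.basis s v i := by
  rw [Lagrange.basis_eq_prod_sub_inv_mul_nodal_div hi, ← Lagrange.nodal_erase_eq_nodal_div hi,
    Lagrange.nodal_eq_mul_nodal_erase hi]
  ring

lemma X_sub_C_mul_divByMonic {R : Type*} [CommRing R] (p : R[X]) (a : R) :
    (X - C a) * (p /ₘ (X - C a)) = p - C (p.eval a) := by
  rw [X_sub_C_mul_divByMonic_eq_sub_modByMonic, modByMonic_X_sub_C_eq_C_eval]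

lemma sum_nodalWeight_mul_divByMonic_eq_zero (hv : Set.InjOn v s) {p : F[X]}
    (hp : p.degree < s.card) :
    ∑ i ∈ s, C (Lagrange.nodalWeight s v i) * (p /ₘ (X - C (v i))) = 0 := by
  rcases s.eq_empty_or_nonempty with rfl | hs
  · exact Finset.sum_empty
  refine (mul_eq_zero.1 ?_).resolve_left (Lagrange.nodal_ne_zero (s := s) (v := v))
  calc Lagrange.nodal s v * ∑ i ∈ s, C (Lagrange.nodalWeight s v i) * (p /ₘ (X - C (v i)))
      = ∑ i ∈ s, Lagrange.basis s v i * (p - C (p.eval (v i))) := by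
        rw [Finset.mul_sum]
        refine Finset.sum_congr rfl fun i hi => ?_
        rw [← X_sub_C_mul_divByMonic]
        linear_combination (p /ₘ (X - C (v i))) * C_nodalWeight_mul_nodal (v := v) hi
    _ = p - Lagrange.interpolate s v (fun i => p.eval (v i)) := by
        simp only [mul_sub, Finset.sum_sub_distrib, ← Finset.sum_mul, Lagrange.sum_basis hv hs,
          one_mul, Lagrange.interpolate_apply, mul_comm (C _)]
    _ = 0 := sub_eq_zero.2 (Lagrange.eq_interpolate hv hp)

lemma nodalWeight_univ_reverse (τ : ℕ → F) (ℓ : ℕ) (i : Fin (ℓ + 1)) :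
    Lagrange.nodalWeight Finset.univ (fun j : Fin (ℓ + 1) => τ (ℓ - j)) i =
      ∏ j ∈ (Finset.range (ℓ + 1)).erase (ℓ - i), (τ (ℓ - i) - τ j)⁻¹ := by
  refine Finset.prod_nbij (fun j => ℓ - j) (fun j hj => by grind) (fun j _ k _ hjk => by grind)
    (fun k hk => ?_) fun _ _ => rfl
  have hk_le : k ≤ ℓ ∧ k ≠ ℓ - i := by grind
  refine ⟨⟨ℓ - k, by omega⟩, ?_, Nat.sub_sub_self hk_le.1⟩
  grind

end LagrangeInterpolation

section BlockMatrices

variable {R ι l m n : Type*}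

/-- The block row `[B_i]_{i : ι}`; a column index is a pair of a block and a position in it. -/
def blockRow (B : ι → Matrix m n R) : Matrix m (ι × n) R :=
  .of fun s p => B p.1 s p.2

/-- The block column `[b_i • I]_{i : ι}`; a row index is a pair of a block and a position in it. -/
def scalarBlockColumn (n : Type*) [DecidableEq n] [Zero R] (b : ι → R) : Matrix (ι × n) n R :=
  .of fun p t => if p.2 = t then b p.1 else 0

lemma blockRow_add [Add R] (A B : ι → Matrix m n R) :
    blockRow (fun i => A i + B i) = blockRow A + blockRow B :=
  rfl

lemma smul_scalarBlockColumn [DecidableEq n] [MulZeroClass R] (c : R) (b : ι → R) :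
    c • scalarBlockColumn n b = scalarBlockColumn n fun i => c * b i := by
  ext p t
  simp [scalarBlockColumn]

lemma mul_blockRow [NonUnitalNonAssocSemiring R] [Fintype m] (A : Matrix l m R)
    (B : ι → Matrix m n R) :
    A * blockRow B = blockRow fun i => A * B i :=
  rfl

lemma blockRow_mul_diagonal [CommSemiring R] [Fintype ι] [DecidableEq ι] [Fintype n]
    [DecidableEq n] (B : ι → Matrix m n R) (d : ι → R) :
    blockRow B * Matrix.diagonal (fun p : ι × n => d p.1) = blockRow fun i => d i • B i := by
  ext s p
  simp [blockRow, mul_comm]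

lemma blockRow_mul_scalarBlockColumn [CommSemiring R] [Fintype ι] [Fintype n] [DecidableEq n]
    (B : ι → Matrix m n R) (b : ι → R) :
    blockRow B * scalarBlockColumn n b = ∑ i, b i • B i := by
  ext s t
  simp [blockRow, scalarBlockColumn, Matrix.mul_apply, Fintype.sum_prod_type, Matrix.sum_apply,
    mul_comm]

lemma diagonal_mul_scalarBlockColumn [NonUnitalNonAssocSemiring R] [Fintype ι] [DecidableEq ι]
    [Fintype n] [DecidableEq n] (d b : ι → R) :
    Matrix.diagonal (fun p : ι × n => d p.1) * scalarBlockColumn n b =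
      scalarBlockColumn n fun i => d i * b i := by
  ext p t
  simp [scalarBlockColumn]

lemma det_diagonal_fst [CommRing R] [Fintype ι] [DecidableEq ι] [Fintype n]
    [DecidableEq n] (d : ι → R) :
    (Matrix.diagonal fun p : ι × n => d p.1).det = (∏ i, d i) ^ Fintype.card n := by
  simp [Fintype.prod_prod_type, Finset.prod_pow]

/-- Splits off the block with index `0` from a block index in `Fin (N + 1)`, so that a matrix of
`N + 1` block rows and columns becomes a `2 × 2` block matrix. -/
def finSuccProdEquiv (N : ℕ) (n : Type*) : Fin (N + 1) × n ≃ n ⊕ Fin N × n :=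
  ((finSuccEquiv N).prodCongr (.refl n)).trans optionProdEquiv

lemma finSuccProdEquiv_zero (N : ℕ) (t : n) : finSuccProdEquiv N n (0, t) = .inl t := rfl

lemma finSuccProdEquiv_succ {N : ℕ} (i : Fin N) (t : n) :
    finSuccProdEquiv N n (i.succ, t) = .inr (i, t) := by
  simp [finSuccProdEquiv]

lemma fromBlocks_submatrix_finSuccProdEquiv [DecidableEq n] [Zero R] [One R] (N : ℕ)
    (A : Matrix n n R) :
    (Matrix.fromBlocks A 0 0 (1 : Matrix (Fin N × n) (Fin N × n) R)).submatrix
        (finSuccProdEquiv N n) (finSuccProdEquiv N n) =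
      .of fun q r => if q.1 = r.1 then
        (if q.1.val = 0 then A q.2 r.2 else if q.2 = r.2 then 1 else 0) else 0 := by
  ext ⟨r, s⟩ ⟨c, t⟩
  cases r using Fin.cases <;> cases c using Fin.cases <;>
    simp [finSuccProdEquiv_zero, finSuccProdEquiv_succ, Matrix.one_apply, ite_and, eq_comm]

end BlockMatrices

section UnimodularEquivalence

variable {R l m n : Type*} [CommRing R]

/-- Equivalence of matrices over a commutative ring, through square matrices of unit determinant.
Over `F[X]` with `F` a field the units are the nonzero constants, so these are the unimodular
matrices. -/
def UnimodularlyEquivalent [Fintype m] [DecidableEq m] [Fintype n] [DecidableEq n]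
    (A B : Matrix m n R) : Prop :=
  ∃ (U : Matrix m m R) (V : Matrix n n R), IsUnit U.det ∧ IsUnit V.det ∧ U * A * V = B

lemma UnimodularlyEquivalent.submatrix {m' n' : Type*}
    [Fintype m] [DecidableEq m] [Fintype n] [DecidableEq n]
    [Fintype m'] [DecidableEq m'] [Fintype n'] [DecidableEq n']
    {A B : Matrix m n R} (h : UnimodularlyEquivalent A B) (e : m' ≃ m) (f : n' ≃ n) :
    UnimodularlyEquivalent (A.submatrix e f) (B.submatrix e f) := by
  obtain ⟨U, V, hU, hV, rfl⟩ := h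
  refine ⟨U.submatrix e e, V.submatrix f f, ?_, ?_, ?_⟩
  · rwa [Matrix.det_submatrix_equiv_self]
  · rwa [Matrix.det_submatrix_equiv_self]
  · simp only [Matrix.submatrix_mul_equiv]

lemma unimodularlyEquivalent_fromBlocks_one_mul
    [Fintype l] [DecidableEq l] [Fintype m] [DecidableEq m] [Fintype n] [DecidableEq n]
    (A : Matrix l m R) (B : Matrix l n R) {M : Matrix (m ⊕ n) (m ⊕ n) R} (hM : IsUnit M.det) :
    UnimodularlyEquivalent (Matrix.fromBlocks A B 0 (1 : Matrix n n R) * M)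
      (Matrix.fromBlocks A 0 0 1) := by
  refine ⟨Matrix.fromBlocks 1 (-B) 0 1, M⁻¹, ?_, M.isUnit_nonsing_inv_det hM, ?_⟩
  · simp
  · rw [Matrix.mul_assoc, Matrix.mul_nonsing_inv_cancel_right _ _ hM]
    simp [Matrix.fromBlocks_multiply]

lemma unimodularlyEquivalent_polynomial_iff {F : Type*} [Field F]
    [Fintype m] [DecidableEq m] [Fintype n] [DecidableEq n] {A B : Matrix m n F[X]} :
    UnimodularlyEquivalent A B ↔ ∃ (U : Matrix m m F[X]) (V : Matrix n n F[X]),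
      (∃ c : F, c ≠ 0 ∧ U.det = C c) ∧ (∃ c : F, c ≠ 0 ∧ V.det = C c) ∧ U * A * V = B := by
  simp only [UnimodularlyEquivalent, Polynomial.isUnit_iff, isUnit_iff_ne_zero, eq_comm (b := C _)]

end UnimodularEquivalence

section LagrangePencil

variable {F ι m n : Type*} [Field F] [Fintype ι] [DecidableEq ι] [DecidableEq n]

/-- The Lagrange interpolation companion pencil of a possibly rectangular matrix polynomial `P` on
the nodes `v`, in blocks `[[0, -P(v_i)], [β_i I, diag((z - v_i) I)]]` with barycentric weights
`β_i`. -/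
noncomputable def lagrangePencil (v : ι → F) (P : Matrix m n F[X]) :
    Matrix (m ⊕ ι × n) (n ⊕ ι × n) F[X] :=
  .fromBlocks 0 (blockRow fun i => -(P.map (eval (v i))).map C)
    (scalarBlockColumn n fun i => C (Lagrange.nodalWeight Finset.univ v i))
    (.diagonal fun p => X - C (v p.1))

variable [Fintype n] {v : ι → F}

lemma lagrangePencil_eq_fromBlocks_mul (hv : Function.Injective v) {P : Matrix m n F[X]}
    (hP : ∀ s t, (P s t).degree < Fintype.card ι) :
    lagrangePencil v P =
      Matrix.fromBlocks P (blockRow fun i => P.map (· /ₘ (X - C (v i)))) 0 1 *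
        lagrangePencil v (1 : Matrix n n F[X]) := by
  have weighted_sum :
      ∑ i, C (Lagrange.nodalWeight Finset.univ v i) • P.map (· /ₘ (X - C (v i))) = 0 := by
    ext1 s t
    simpa [Matrix.sum_apply] using sum_nodalWeight_mul_divByMonic_eq_zero hv.injOn (hP s t)
  have division (i : ι) : -P + (X - C (v i)) • P.map (· /ₘ (X - C (v i))) =
      -(P.map (eval (v i))).map C := by
    ext1 s t
    simp [X_sub_C_mul_divByMonic, neg_add_eq_sub]
  rw [lagrangePencil, lagrangePencil, Matrix.fromBlocks_multiply, blockRow_mul_scalarBlockColumn,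
    weighted_sum, mul_blockRow, blockRow_mul_diagonal _ fun i => X - C (v i), ← blockRow_add]
  simp [division]

lemma det_lagrangePencil_one [Nonempty ι] (hv : Function.Injective v) :
    (lagrangePencil v (1 : Matrix n n F[X])).det = 1 := by
  let w := Lagrange.nodal Finset.univ v
  let b := Lagrange.basis Finset.univ v
  have sum_basis : ∑ i, b i = 1 :=
    Lagrange.sum_basis hv.injOn Finset.univ_nonempty
  have weight_mul_nodal (i : ι) :
      w * C (Lagrange.nodalWeight Finset.univ v i) = (X - C (v i)) * b i := by
    rw [mul_comm, C_nodalWeight_mul_nodal (Finset.mem_univ i)]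
  let T : Matrix (n ⊕ ι × n) (n ⊕ ι × n) F[X] :=
    .fromBlocks (w • 1) 0 (-scalarBlockColumn n b) 1
  have product : lagrangePencil v 1 * T =
      .fromBlocks 1 (blockRow fun _ => -1) 0 (.diagonal fun p => X - C (v p.1)) := by
    rw [lagrangePencil, Matrix.fromBlocks_multiply, Matrix.mul_neg, Matrix.mul_neg,
      blockRow_mul_scalarBlockColumn, diagonal_mul_scalarBlockColumn fun i => X - C (v i)]
    simp [smul_scalarBlockColumn, weight_mul_nodal, ← Finset.sum_smul, sum_basis]
  have det_T : T.det = w ^ Fintype.card n := by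
    simp [T]
  have det_product := congrArg Matrix.det product
  rw [Matrix.det_mul, det_T, Matrix.det_fromBlocks_zero₂₁, Matrix.det_one, one_mul,
    det_diagonal_fst fun i => X - C (v i)] at det_product
  exact mul_eq_right₀ (pow_ne_zero _ Lagrange.nodal_ne_zero) |>.1 det_product

theorem lagrange_pencil_linearization_general_general [Fintype m] [DecidableEq m] [Nonempty ι]
    (hv : Function.Injective v) {P : Matrix m n F[X]}
    (hP : ∀ s t, (P s t).degree < Fintype.card ι) :
    UnimodularlyEquivalent (lagrangePencil v P)
      (Matrix.fromBlocks P 0 0 (1 : Matrix (ι × n) (ι × n) F[X])) := by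
  rw [lagrangePencil_eq_fromBlocks_mul hv hP]
  exact unimodularlyEquivalent_fromBlocks_one_mul _ _ (by simp [det_lagrangePencil_one hv])

end LagrangePencil

/-- For distinct nodes `τ_0, …, τ_ℓ` with barycentric weights `β_k`,
and ANY `n×n` matrix polynomial `P(z)` of degree at most `ℓ` with values
`P_k = P(τ_k)` (no invertibility or regularity assumption), the Lagrange-basis
companion pencil `L(z)` (blocks encoded on `Fin (ℓ+2) × Fin n`, block index first)
is equivalent over `F[z]` to `diag(P(z), I_n, …, I_n)` (`ℓ+1` identity blocks):
there exist unimodular matrix polynomials `E(z)`, `F(z)` with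
`E(z)·L(z)·F(z) = diag(P(z), I_n, …, I_n)`. -/
theorem lagrange_pencil_linearization_general
    {F : Type*} [Field F] (n ℓ : ℕ) (hn : 1 ≤ n)
    (τ : ℕ → F) (hτ : ∀ j ≤ ℓ, ∀ k ≤ ℓ, j ≠ k → τ j ≠ τ k)
    (β : ℕ → F)
    (hβ : ∀ k ≤ ℓ, β k = ∏ j ∈ (Finset.range (ℓ + 1)).erase k, (τ k - τ j)⁻¹)
    (P : Matrix (Fin n) (Fin n) (Polynomial F))
    (hdeg : ∀ s t : Fin n, (P s t).degree ≤ (ℓ : ℕ))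
    (L : Matrix (Fin (ℓ + 2) × Fin n) (Fin (ℓ + 2) × Fin n) (Polynomial F))
    (hL : ∀ r c : Fin (ℓ + 2), ∀ s t : Fin n, L (r, s) (c, t) =
      if r.val = 0 then
        (if c.val = 0 then 0
         else (-(P.map (eval (τ (ℓ - (c.val - 1))))).map C) s t)
      else if c.val = 0 then (if s = t then C (β (ℓ - (r.val - 1))) else 0)
      else if r = c then (if s = t then X - C (τ (ℓ - (r.val - 1))) else 0)
      else 0) :
    ∃ E Fm : Matrix (Fin (ℓ + 2) × Fin n) (Fin (ℓ + 2) × Fin n) (Polynomial F),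
      (∃ c : F, c ≠ 0 ∧ E.det = C c) ∧
      (∃ c : F, c ≠ 0 ∧ Fm.det = C c) ∧
      E * L * Fm = Matrix.of fun q r : Fin (ℓ + 2) × Fin n =>
        if q.1 = r.1 then
          (if q.1.val = 0 then P q.2 r.2 else if q.2 = r.2 then 1 else 0)
        else 0 := by
  let σ : Fin (ℓ + 1) → F := fun i => τ (ℓ - i)
  let e := finSuccProdEquiv (ℓ + 1) (Fin n)
  have hσ : Function.Injective σ := fun i j hij => by
    by_contra hne
    exact hτ _ (Nat.sub_le ℓ i) _ (Nat.sub_le ℓ j) (by omega) hij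
  have hL_eq : L = (lagrangePencil σ P).submatrix e e := by
    have hweight (i : Fin (ℓ + 1)) : β (ℓ - i) = Lagrange.nodalWeight Finset.univ σ i := by
      rw [hβ _ (Nat.sub_le ℓ i), nodalWeight_univ_reverse]
    ext1 ⟨r, s⟩ ⟨c, t⟩
    rw [hL]
    cases r using Fin.cases <;> cases c using Fin.cases <;>
      simp [e, σ, lagrangePencil, blockRow, scalarBlockColumn, finSuccProdEquiv_zero,
        finSuccProdEquiv_succ, hweight, Matrix.diagonal_apply, ite_and]
  have hdeg_lt (s t : Fin n) : (P s t).degree < Fintype.card (Fin (ℓ + 1)) := by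
    rw [Fintype.card_fin]
    exact (hdeg s t).trans_lt (by exact_mod_cast ℓ.lt_succ_self)
  rw [← unimodularlyEquivalent_polynomial_iff, hL_eq, ← fromBlocks_submatrix_finSuccProdEquiv]
  exact (lagrange_pencil_linearization_general_general hσ hdeg_lt).submatrix e e
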